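/- arXiv:1108.4400 — 10 statements merged into one kernel-verified Lean document; each statement's English description precedes it below -/
import Mathlib

section
/- A sequence (a_n) of real numbers is Cauchy if and only if for every ε > 0 and every function F : ℕ → ℕ there exists m ∈ ℕ such that |a_n − a_{n'}| < ε for all n, n' ∈ [m, F(m)]. -/
/-! Metastability is the no-counterexample interpretation of the Cauchy property: if a sequence is
not Cauchy for a given tolerance, choose for each `N` a pair of indices beyond `N` that violates the
tolerance; a function `F` bounding both indices then defeats every window `[N, F N]`. -/

open Set
open scoped Uniformity

theorem exists_forall_ge_iff_forall_exists_Icc {ι : Type*} [Preorder ι] [IsDirectedOrder ι]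
    {r : ι → ι → Prop} :
    (∃ N, ∀ m, N ≤ m → ∀ n, N ≤ n → r m n) ↔
      ∀ F : ι → ι, ∃ N, ∀ m n, m ∈ Icc N (F N) → n ∈ Icc N (F N) → r m n := by
  constructor
  · rintro ⟨N, hN⟩ F
    exact ⟨N, fun m n hm hn ↦ hN m hm.1 n hn.1⟩
  · intro h
    by_contra! hcounter
    choose p hp q hq hpq using hcounter
    choose F hpF hqF using fun N ↦ exists_ge_ge (p N) (q N)
    obtain ⟨N, hN⟩ := h F
    exact hpq N (hN (p N) (q N) ⟨hp N, hpF N⟩ ⟨hq N, hqF N⟩)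

theorem stmt_1_general {α ι κ : Type*} [UniformSpace α] [Nonempty ι] [SemilatticeSup ι]
    {p : κ → Prop} {s : κ → SetRel α α} (hs : (𝓤 α).HasBasis p s) (a : ι → α) :
    CauchySeq a ↔
      ∀ i, p i → ∀ F : ι → ι, ∃ N,
        ∀ m n, m ∈ Icc N (F N) → n ∈ Icc N (F N) → (a m, a n) ∈ s i := by
  simp only [hs.cauchySeq_iff, exists_forall_ge_iff_forall_exists_Icc]

theorem stmt_1 (a : ℕ → ℝ) :
    CauchySeq a ↔
      ∀ ε : ℝ, 0 < ε → ∀ F : ℕ → ℕ, ∃ m : ℕ,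
        ∀ n n', m ≤ n → n ≤ F m → m ≤ n' → n' ≤ F m →
          |a n - a n'| < ε := by
  simpa only [mem_Icc, and_imp, mem_ofPred_eq, Real.dist_eq] using
    stmt_1_general Metric.uniformity_basis_dist a
end

section
/- Let (f_n) be a sequence of measurable real-valued functions on a measure space (X, B, μ). Then the statement 'for every λ > 0 and ε > 0 there exists m such that μ({x : ∃ n, n' ≥ m, |f_n(x) − f_{n'}(x)| ≥ ε}) < λ' holds if and only if the metastable statement 'for every λ > 0, ε > 0, and F : ℕ → ℕ there exists m such that μ({x : ∃ n, n' ∈ [m, F(m)], |f_n(x) − f_{n'}(x)| ≥ ε}) < λ' holds. -/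
open MeasureTheory

/-!
For fixed `ε`, continuity from below writes the measure of the tail set at `m` as the supremum over
`k` of the measures of the sets on `[m, k]`. Both statements say that an infimum over `m` vanishes,
and complete distributivity, `⨅ m, ⨆ k, a m k = ⨆ F, ⨅ m, a m (F m)`, turns the infimum over tails
into the supremum over `F` of the metastable infima.
-/

open Filter Set
open scoped ENNReal

theorem iInf_eq_zero_iff_forall_exists_lt_ofReal {ι : Sort*} (a : ι → ℝ≥0∞) :
    ⨅ i, a i = 0 ↔ ∀ r : ℝ, 0 < r → ∃ i, a i < ENNReal.ofReal r := by
  refine iInf_eq_bot.trans ⟨fun h r hr ↦ h _ (ENNReal.ofReal_pos.2 hr), fun h b hb ↦ ?_⟩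
  obtain ⟨r, -, hr, hrb⟩ := ENNReal.lt_iff_exists_real_btwn.1 hb
  obtain ⟨i, hi⟩ := h r (ENNReal.ofReal_pos.1 hr)
  exact ⟨i, hi.trans hrb⟩

section Oscillation

variable {ι X E : Type*} [PseudoMetricSpace E]

/-- The points at which the family `f` oscillates by at least `ε` over the index set `I`: the
exceptional sets of both convergence statements, with `I` a tail or a bounded interval. -/
def oscillationSet (f : ι → X → E) (ε : ℝ) (I : Set ι) : Set X :=
  {x | ∃ n ∈ I, ∃ n' ∈ I, ε ≤ dist (f n x) (f n' x)}

theorem oscillationSet_mono (f : ι → X → E) (ε : ℝ) : Monotone (oscillationSet f ε) :=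
  fun _ _ hIJ _ ⟨n, hn, n', hn', hx⟩ ↦ ⟨n, hIJ hn, n', hIJ hn', hx⟩

variable [Preorder ι] [IsDirectedOrder ι]

theorem oscillationSet_Ici_eq_iUnion_Icc (f : ι → X → E) (ε : ℝ) (m : ι) :
    oscillationSet f ε (Ici m) = ⋃ k, oscillationSet f ε (Icc m k) := by
  refine Subset.antisymm ?_ (iUnion_subset fun k ↦ oscillationSet_mono f ε Icc_subset_Ici_self)
  rintro x ⟨n, hn, n', hn', hx⟩
  obtain ⟨k, hnk, hnk'⟩ := exists_ge_ge n n'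
  exact mem_iUnion.2 ⟨k, n, ⟨hn, hnk⟩, n', ⟨hn', hnk'⟩, hx⟩

variable [(atTop : Filter ι).IsCountablyGenerated] [MeasurableSpace X]

theorem measure_oscillationSet_Ici_eq_iSup (μ : Measure X) (f : ι → X → E) (ε : ℝ) (m : ι) :
    μ (oscillationSet f ε (Ici m)) = ⨆ k, μ (oscillationSet f ε (Icc m k)) := by
  have hmono : Monotone fun k ↦ oscillationSet f ε (Icc m k) :=
    fun _ _ hkl ↦ oscillationSet_mono f ε (Icc_subset_Icc_right hkl)
  rw [oscillationSet_Ici_eq_iUnion_Icc, hmono.measure_iUnion]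

theorem iInf_measure_oscillationSet_Ici (μ : Measure X) (f : ι → X → E) (ε : ℝ) :
    ⨅ m, μ (oscillationSet f ε (Ici m)) =
      ⨆ F : ι → ι, ⨅ m, μ (oscillationSet f ε (Icc m (F m))) := by
  simp only [measure_oscillationSet_Ici_eq_iSup, iInf_iSup_eq]

end Oscillation

theorem stmt_3_general {ι X E : Type*} [Preorder ι] [IsDirectedOrder ι]
    [(atTop : Filter ι).IsCountablyGenerated] [MeasurableSpace X] [PseudoMetricSpace E]
    (μ : Measure X) (f : ι → X → E) :
    (∀ lam : ℝ, 0 < lam → ∀ ε : ℝ, 0 < ε → ∃ m : ι,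
        μ (oscillationSet f ε (Ici m)) < ENNReal.ofReal lam) ↔
    (∀ lam : ℝ, 0 < lam → ∀ ε : ℝ, 0 < ε → ∀ F : ι → ι, ∃ m : ι,
        μ (oscillationSet f ε (Icc m (F m))) < ENNReal.ofReal lam) := by
  calc
    _ ↔ ∀ ε : ℝ, 0 < ε → ⨅ m, μ (oscillationSet f ε (Ici m)) = 0 := by
      simp only [iInf_eq_zero_iff_forall_exists_lt_ofReal]
      exact forall₂_comm
    _ ↔ ∀ ε : ℝ, 0 < ε → ∀ F : ι → ι, ⨅ m, μ (oscillationSet f ε (Icc m (F m))) = 0 := by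
      simp only [iInf_measure_oscillationSet_Ici, ENNReal.iSup_eq_zero]
    _ ↔ _ := by
      simp only [iInf_eq_zero_iff_forall_exists_lt_ofReal]
      exact ⟨fun h lam hlam ε hε F ↦ h ε hε F lam hlam, fun h ε hε F lam hlam ↦ h lam hlam ε hε F⟩

theorem stmt_3 {X : Type*} [MeasurableSpace X] (μ : Measure X)
    (f : ℕ → X → ℝ) (hf : ∀ n, Measurable (f n)) :
    (∀ lam : ℝ, 0 < lam → ∀ ε : ℝ, 0 < ε → ∃ m : ℕ,
        μ {x | ∃ n n', m ≤ n ∧ m ≤ n' ∧ ε ≤ |f n x - f n' x|} < ENNReal.ofReal lam) ↔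
    (∀ lam : ℝ, 0 < lam → ∀ ε : ℝ, 0 < ε → ∀ F : ℕ → ℕ, ∃ m : ℕ,
        μ {x | ∃ n ∈ Set.Icc m (F m), ∃ n' ∈ Set.Icc m (F m),
            ε ≤ |f n x - f n' x|} < ENNReal.ofReal lam) := by
  simpa only [oscillationSet, mem_Ici, Real.dist_eq, exists_and_left] using stmt_3_general μ f
end

section
/- For every functional M : (ℕ → ℕ) → ℕ there is a continuous functional M̄ : (ℕ → ℕ) → ℕ with the following property: for every F : ℕ → ℕ there exists F' : ℕ → ℕ such that M̄(F) = M(F') and F(j) = F'(j) for every j ≤ M̄(F). -/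
/-!
Whether `n` is the value of `M` at some `G` agreeing with `F` up to `n` depends only on the values
of `F` up to `n`. Let `Mbar F` be the least such `n`; there is one, because `M F` qualifies. If `F'`
agrees with `F` up to `Mbar F`, then the same `n ≤ Mbar F` qualify for `F'` as for `F`, so
`Mbar F' = Mbar F`: the functional `Mbar` is continuous and is its own modulus of continuity.
-/

section LeastLocalValue

variable {ι : Type*} [LinearOrder ι] {E : ι → Type*} {M : (∀ i, E i) → ι} {F F' : ∀ i, E i} {i : ι}

/-- The *local values* of a functional `M` at `F`: the indices `i` such that `M` takes the value `i`
at some function agreeing with `F` up to `i`. The value and the radius of agreement share the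
index `i`, so a smaller local value asks for less agreement. -/
def localValues (M : (∀ i, E i) → ι) (F : ∀ i, E i) : Set ι :=
  {i | ∃ G, i = M G ∧ ∀ j ≤ i, F j = G j}

theorem apply_mem_localValues (M : (∀ i, E i) → ι) (F : ∀ i, E i) : M F ∈ localValues M F :=
  ⟨F, rfl, fun _ _ => rfl⟩

theorem mem_localValues_of_agree (hF : ∀ j ≤ i, F' j = F j) (hi : i ∈ localValues M F) :
    i ∈ localValues M F' := by
  obtain ⟨G, hMG, hFG⟩ := hi
  exact ⟨G, hMG, fun j hj => (hF j hj).trans (hFG j hj)⟩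

variable [WellFoundedLT ι]

/-- The least local value of `M` at `F`. As a functional of `F`, it is the continuous replacement
for `M`. -/
noncomputable def leastLocalValue (M : (∀ i, E i) → ι) (F : ∀ i, E i) : ι :=
  wellFounded_lt.min (localValues M F) ⟨M F, apply_mem_localValues M F⟩

theorem leastLocalValue_mem (M : (∀ i, E i) → ι) (F : ∀ i, E i) :
    leastLocalValue M F ∈ localValues M F :=
  wellFounded_lt.min_mem _ _

theorem leastLocalValue_le (hi : i ∈ localValues M F) : leastLocalValue M F ≤ i :=
  wellFounded_lt.min_le hi

theorem leastLocalValue_eq_of_agree (h : ∀ j ≤ leastLocalValue M F, F' j = F j) :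
    leastLocalValue M F' = leastLocalValue M F := by
  have hle : leastLocalValue M F' ≤ leastLocalValue M F :=
    leastLocalValue_le (mem_localValues_of_agree h (leastLocalValue_mem M F))
  have h' : ∀ j ≤ leastLocalValue M F', F j = F' j := fun j hj => (h j (hj.trans hle)).symm
  have hge : leastLocalValue M F ≤ leastLocalValue M F' :=
    leastLocalValue_le (mem_localValues_of_agree h' (leastLocalValue_mem M F'))
  exact hle.antisymm hge

end LeastLocalValue

/-
The modulus of continuity is required to be `Mbar F` itself: when `ι` has a greatest element, a mere
`∃ k` would hold for every functional.
-/
theorem stmt_5_general {ι : Type*} [LinearOrder ι] [WellFoundedLT ι] {E : ι → Type*}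
    (M : (∀ i, E i) → ι) :
    ∃ Mbar : (∀ i, E i) → ι,
      (∀ F F' : ∀ i, E i, (∀ j ≤ Mbar F, F' j = F j) → Mbar F' = Mbar F) ∧
      (∀ F : ∀ i, E i, ∃ F' : ∀ i, E i, Mbar F = M F' ∧ ∀ j ≤ Mbar F, F j = F' j) :=
  ⟨leastLocalValue M, fun _ _ => leastLocalValue_eq_of_agree, leastLocalValue_mem M⟩

theorem stmt_5 (M : (ℕ → ℕ) → ℕ) :
    ∃ Mbar : (ℕ → ℕ) → ℕ,
      (∀ F : ℕ → ℕ, ∃ k : ℕ, ∀ F' : ℕ → ℕ,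
        (∀ j ≤ k, F' j = F j) → Mbar F' = Mbar F) ∧
      (∀ F : ℕ → ℕ, ∃ F' : ℕ → ℕ, Mbar F = M F' ∧
        ∀ j ≤ Mbar F, F j = F' j) := by
  obtain ⟨Mbar, hcont, hval⟩ := stmt_5_general M
  exact ⟨Mbar, fun F => ⟨Mbar F, hcont F⟩, hval⟩
end

section
/- For every functional M : (ℕ → ℕ) → ℕ and all reals λ > λ' > 0, there exists M' ∈ ℕ with the following property: for every probability space (X, B, μ) and every sequence (A_n) of measurable subsets of X, if for every function F : ℕ → ℕ one has μ(⋂_{m ≤ M(F)} ⋃_{n ∈ [m, F(m)]} A_n) < λ', then there is an n ≤ M' such that μ(A_n) < λ. -/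
open MeasureTheory

open scoped ENNReal

/-!
If the measures of the unions over `[m, F m]` and over `[m, max (M F) (F m)]` differ by less than
`δ m` for all `m ≤ M F`, then `A (M F)`, being contained in each of the larger unions, has measure
at most that of `⋂ m ≤ M F, ⋃ n ∈ [m, F m], A n` plus `∑ δ m`.

Such an `F` exists for each single array `g m N = μ (⋃ n ∈ [m, N], A n)`: let `F m` almost attain
`⨆ N, g m N`. The requirement on `g` at a fixed `F` involves finitely many entries, so it is open in
the product topology. Arrays with uniformly bounded entries form a compact space, so finitely many
`F` serve all measures and all sequences at once, and `M'` is the largest of the values `M F`.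
-/

lemma exists_forall_lt_add_of_iSup_ne_top {ι : Type*} [Nonempty ι] {f : ι → ℝ≥0∞} {δ : ℝ≥0∞}
    (hf : ⨆ i, f i ≠ ∞) (hδ : δ ≠ 0) : ∃ i, ∀ j, f j < f i + δ := by
  have hlt : ⨆ i, f i < ⨆ i, (f i + δ) := by
    rw [← ENNReal.iSup_add]
    exact ENNReal.lt_add_right hf hδ
  obtain ⟨i, hi⟩ := lt_iSup_iff.1 hlt
  exact ⟨i, fun j => (le_iSup f j).trans_lt hi⟩

theorem exists_finset_forall_exists_forall_lt_add {ι κ : Type*} [Nonempty κ]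
    (s : (ι → κ) → Finset ι) (K : (ι → κ) → ι → κ) {C δ : ι → ℝ≥0∞}
    (hC : ∀ i, C i ≠ ∞) (hδ : ∀ i, δ i ≠ 0) :
    ∃ 𝓕 : Finset (ι → κ), ∀ g : ι → κ → ℝ≥0∞, (∀ i j, g i j ≤ C i) →
      ∃ F ∈ 𝓕, ∀ i ∈ s F, g i (K F i) < g i (F i) + δ i := by
  let U (F : ι → κ) : Set (ι → κ → ℝ≥0∞) := {g | ∀ i ∈ s F, g i (K F i) < g i (F i) + δ i}
  have isOpen_U (F : ι → κ) : IsOpen (U F) := by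
    simp only [U, Set.ofPred_forall]
    exact isOpen_biInter_finset fun i _ => isOpen_lt (by fun_prop) (by fun_prop)
  have bounded_subset_iUnion : Set.Iic (fun i (_ : κ) => C i) ⊆ ⋃ F, U F := by
    intro g hg
    have hsup (i : ι) : ⨆ j, g i j ≠ ∞ := ne_top_of_le_ne_top (hC i) (iSup_le (hg i))
    choose F hF using fun i => exists_forall_lt_add_of_iSup_ne_top (hsup i) (hδ i)
    exact Set.mem_iUnion.2 ⟨F, fun i _ => hF i (K F i)⟩
  obtain ⟨𝓕, h𝓕⟩ :=
    isClosed_Iic.isCompact.elim_finite_subcover U isOpen_U bounded_subset_iUnion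
  refine ⟨𝓕, fun g hg => ?_⟩
  simpa only [Set.mem_iUnion, exists_prop, U, Set.mem_ofPred_eq] using h𝓕 hg

lemma measure_le_measure_biInter_add_sum_sdiff {X ι 𝓜 : Type*} [FunLike 𝓜 (Set X) ℝ≥0∞]
    [OuterMeasureClass 𝓜 X] (μ : 𝓜) (T : Set X) (s : Finset ι) (B : ι → Set X) :
    μ T ≤ μ (⋂ i ∈ s, B i) + ∑ i ∈ s, μ (T \ B i) := by
  have hT : T ⊆ (⋂ i ∈ s, B i) ∪ ⋃ i ∈ s, T \ B i := by
    simp only [← Set.sdiff_subset_iff, Set.sdiff_iInter, subset_rfl]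
  calc μ T ≤ μ ((⋂ i ∈ s, B i) ∪ ⋃ i ∈ s, T \ B i) := measure_mono hT
    _ ≤ μ (⋂ i ∈ s, B i) + μ (⋃ i ∈ s, T \ B i) := measure_union_le _ _
    _ ≤ μ (⋂ i ∈ s, B i) + ∑ i ∈ s, μ (T \ B i) := by
      gcongr
      exact measure_biUnion_finset_le s _

section

variable {X : Type*} [MeasurableSpace X] {μ : Measure X} [IsFiniteMeasure μ] {A : ℕ → Set X}

lemma measure_sdiff_biUnion_Icc_le (hA : ∀ n, NullMeasurableSet (A n) μ) {m L N K : ℕ}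
    {δ : ℝ≥0∞} (hmL : m ≤ L) (hLK : L ≤ K) (hNK : N ≤ K)
    (hδ : μ (⋃ n ∈ Set.Icc m K, A n) ≤ μ (⋃ n ∈ Set.Icc m N, A n) + δ) :
    μ (A L \ ⋃ n ∈ Set.Icc m N, A n) ≤ δ := by
  have hmeas : NullMeasurableSet (⋃ n ∈ Set.Icc m N, A n) μ :=
    .biUnion (Set.to_countable _) fun n _ => hA n
  have hmono : ⋃ n ∈ Set.Icc m N, A n ⊆ ⋃ n ∈ Set.Icc m K, A n :=
    Set.biUnion_subset_biUnion_left (Set.Icc_subset_Icc_right hNK)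
  have hL : A L ⊆ ⋃ n ∈ Set.Icc m K, A n := Set.subset_biUnion_of_mem (u := A) ⟨hmL, hLK⟩
  exact (measure_mono (Set.sdiff_subset_sdiff_left hL)).trans
    ((measure_sdiff_le_iff_le_add hmeas hmono (measure_ne_top μ _)).2 hδ)

lemma measure_le_measure_iInter_biUnion_Icc_add_sum (hA : ∀ n, NullMeasurableSet (A n) μ)
    {F : ℕ → ℕ} {L : ℕ} {δ : ℕ → ℝ≥0∞}
    (hδ : ∀ m ≤ L, μ (⋃ n ∈ Set.Icc m (max L (F m)), A n) ≤
      μ (⋃ n ∈ Set.Icc m (F m), A n) + δ m) :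
    μ (A L) ≤ μ (⋂ m ≤ L, ⋃ n ∈ Set.Icc m (F m), A n) + ∑ m ∈ Finset.Iic L, δ m := by
  have hle := measure_le_measure_biInter_add_sum_sdiff μ (A L) (Finset.Iic L)
    fun m => ⋃ n ∈ Set.Icc m (F m), A n
  simp only [Finset.mem_Iic] at hle
  refine hle.trans (add_le_add_right (Finset.sum_le_sum fun m hm => ?_) _)
  have hmL : m ≤ L := Finset.mem_Iic.1 hm
  exact measure_sdiff_biUnion_Icc_le hA hmL (le_max_left _ _) (le_max_right _ _) (hδ m hmL)

end

universe u

theorem exists_finset_forall_exists_measure_lt_add (M : (ℕ → ℕ) → ℕ) {C ε : ℝ≥0∞}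
    (hC : C ≠ ∞) (hε : ε ≠ 0) :
    ∃ 𝓕 : Finset (ℕ → ℕ), ∀ (X : Type u) (_ : MeasurableSpace X) (μ : Measure X),
      μ Set.univ ≤ C → ∀ A : ℕ → Set X, (∀ n, NullMeasurableSet (A n) μ) →
      ∃ F ∈ 𝓕, μ (A (M F)) < μ (⋂ m ≤ M F, ⋃ n ∈ Set.Icc m (F m), A n) + ε := by
  obtain ⟨δ, hδ_pos, hδ_sum⟩ := ENNReal.exists_pos_sum_of_countable' hε ℕ
  obtain ⟨𝓕, h𝓕⟩ := exists_finset_forall_exists_forall_lt_add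
    (fun F => Finset.Iic (M F)) (fun F m => max (M F) (F m)) (fun _ => hC) fun m => (hδ_pos m).ne'
  refine ⟨𝓕, fun X _ μ hμ A hA => ?_⟩
  have : IsFiniteMeasure μ := ⟨hμ.trans_lt hC.lt_top⟩
  obtain ⟨F, hF, hlt⟩ := h𝓕 (fun m N => μ (⋃ n ∈ Set.Icc m N, A n))
    fun _ _ => (measure_mono (Set.subset_univ _)).trans hμ
  refine ⟨F, hF, ?_⟩
  calc μ (A (M F))
      ≤ μ (⋂ m ≤ M F, ⋃ n ∈ Set.Icc m (F m), A n) + ∑ m ∈ Finset.Iic (M F), δ m :=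
        measure_le_measure_iInter_biUnion_Icc_add_sum hA
          fun m hm => (hlt m (Finset.mem_Iic.2 hm)).le
    _ < μ (⋂ m ≤ M F, ⋃ n ∈ Set.Icc m (F m), A n) + ε :=
        ENNReal.add_lt_add_left (measure_ne_top μ _) ((ENNReal.sum_le_tsum _).trans_lt hδ_sum)

theorem stmt_7_general (M : (ℕ → ℕ) → ℕ) {C lam lam' : ℝ≥0∞} (hC : C ≠ ∞) (hlam : lam' < lam) :
    ∃ M' : ℕ, ∀ (X : Type u) (_ : MeasurableSpace X) (μ : Measure X),
      μ Set.univ ≤ C → ∀ A : ℕ → Set X, (∀ n, NullMeasurableSet (A n) μ) →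
      (∀ F : ℕ → ℕ, μ (⋂ m ≤ M F, ⋃ n ∈ Set.Icc m (F m), A n) < lam') →
      ∃ n ≤ M', μ (A n) < lam := by
  obtain ⟨𝓕, h𝓕⟩ := exists_finset_forall_exists_measure_lt_add M hC (tsub_pos_of_lt hlam).ne'
  refine ⟨𝓕.sup M, fun X _ μ hμ A hA hsmall => ?_⟩
  obtain ⟨F, hF, hlt⟩ := h𝓕 X _ μ hμ A hA
  refine ⟨M F, Finset.le_sup hF, ?_⟩
  calc μ (A (M F)) < μ (⋂ m ≤ M F, ⋃ n ∈ Set.Icc m (F m), A n) + (lam - lam') := hlt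
    _ ≤ lam' + (lam - lam') := by
      gcongr
      exact (hsmall F).le
    _ = lam := add_tsub_cancel_of_le hlam.le

theorem stmt_7 (M : (ℕ → ℕ) → ℕ) (lam lam' : ℝ) (h1 : lam' < lam) (h2 : 0 < lam') :
    ∃ M' : ℕ, ∀ (X : Type) (_ : MeasurableSpace X) (μ : Measure X),
      IsProbabilityMeasure μ → ∀ A : ℕ → Set X, (∀ n, MeasurableSet (A n)) →
      (∀ F : ℕ → ℕ,
        μ (⋂ m ≤ M F, ⋃ n ∈ Set.Icc m (F m), A n) < ENNReal.ofReal lam') →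
      ∃ n ≤ M', μ (A n) < ENNReal.ofReal lam := by
  obtain ⟨M', hM'⟩ := stmt_7_general M ENNReal.one_ne_top
    ((ENNReal.ofReal_lt_ofReal_iff (h2.trans h1)).2 h1)
  exact ⟨M', fun X _ μ _ A hA => hM' X _ μ prob_le_one A fun n => (hA n).nullMeasurableSet⟩
end

section
/- Fix n ∈ ℕ and reals λ > λ' > 0, and let M : (ℕ → ℕ) → ℕ be the functional M(F) = F(0) + n. Then M' = n · ⌈1/(λ − λ')⌉ has the following property: for every probability space (X, B, μ) and every sequence (A_k) of measurable subsets of X, if for every function F : ℕ → ℕ one has μ(⋂_{m ≤ M(F)} ⋃_{k ∈ [m, F(m)]} A_k) < λ', then there is a k ≤ M' such that μ(A_k) < λ. -/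
open MeasureTheory

/-!
Write `a` for `λ` and `b` for `λ'`, and suppose `a ≤ μ (A k)` for all `k ≤ n * c`. Testing the
hypothesis on the function `F` with `F 0 = p` and `F m = p + n` for `m ≠ 0` shows that `A (p + n)`
meets `⋃ k ≤ p, A k` in measure at most `b`. Hence `n` further sets enlarge the union by at least
`a - b`, and after `c` such steps its measure is at least `a + c * (a - b)`, which exceeds the
measure of the whole space once `c` is large enough.
-/

open scoped ENNReal

section

variable {X : Type*}

theorem accumulate_inter_subset_iInter_iUnion_Icc (A : ℕ → Set X) (p q : ℕ) :
    Set.accumulate A p ∩ A q ⊆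
      ⋂ m ≤ q, ⋃ k ∈ Set.Icc m (Function.update (fun _ ↦ q) 0 p m), A k := by
  rintro x ⟨hxp, hxq⟩
  simp only [Set.mem_iInter]
  intro m hm
  rcases eq_or_ne m 0 with rfl | hm0
  · simpa [Set.mem_accumulate] using hxp
  · rw [Function.update_of_ne hm0]
    exact Set.mem_biUnion (Set.right_mem_Icc.2 hm) hxq

variable [MeasurableSpace X] {μ : Measure X} {A U : ℕ → Set X} {a b d : ℝ≥0∞} {n c : ℕ}

theorem measure_zero_add_mul_le_of_le_measure_sdiff (hU : Monotone U)
    (hmeas : ∀ i, NullMeasurableSet (U i) μ) (hd : ∀ i < c, d ≤ μ (U (i + 1) \ U i)) :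
    μ (U 0) + c * d ≤ μ (U c) := by
  induction c with
  | zero => simp
  | succ c ih =>
    calc μ (U 0) + (c + 1 : ℕ) * d = μ (U 0) + c * d + d := by push_cast; ring
      _ ≤ μ (U c) + μ (U (c + 1) \ U c) :=
        add_le_add (ih fun i hi ↦ hd i (hi.trans c.lt_succ_self)) (hd c c.lt_succ_self)
      _ = μ (U (c + 1)) := by
        rw [measure_add_sdiff (hmeas c), Set.union_eq_right.2 (hU c.le_succ)]

theorem measure_accumulate_inter_le
    (h : ∀ F : ℕ → ℕ, μ (⋂ m ≤ F 0 + n, ⋃ k ∈ Set.Icc m (F m), A k) ≤ b) (p : ℕ) :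
    μ (Set.accumulate A p ∩ A (p + n)) ≤ b :=
  (measure_mono <| by simpa using accumulate_inter_subset_iInter_iUnion_Icc A p (p + n)).trans
    (h (Function.update (fun _ ↦ p + n) 0 p))

theorem tsub_le_measure_accumulate_sdiff {ι : Type*} [Preorder ι] {A : ι → Set X} {p q : ι}
    (ha : a ≤ μ (A q)) (hb : μ (Set.accumulate A p ∩ A q) ≤ b) :
    a - b ≤ μ (Set.accumulate A q \ Set.accumulate A p) := by
  have hsub : A q \ Set.accumulate A p ⊆ Set.accumulate A q \ Set.accumulate A p :=
    Set.sdiff_subset_sdiff_left Set.subset_accumulate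
  rw [tsub_le_iff_left]
  calc a ≤ μ (A q) := ha
    _ ≤ μ (A q ∩ Set.accumulate A p) + μ (A q \ Set.accumulate A p) :=
      measure_le_inter_add_sdiff μ _ _
    _ ≤ b + μ (Set.accumulate A q \ Set.accumulate A p) :=
      add_le_add (Set.inter_comm _ _ ▸ hb) (measure_mono hsub)

theorem stmt_8_general (hA : ∀ k, NullMeasurableSet (A k) μ)
    (h : ∀ F : ℕ → ℕ, μ (⋂ m ≤ F 0 + n, ⋃ k ∈ Set.Icc m (F m), A k) ≤ b)
    (hc : μ Set.univ < a + c * (a - b)) :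
    ∃ k ≤ n * c, μ (A k) < a := by
  by_contra! ha
  have hmono : Monotone fun i ↦ Set.accumulate A (n * i) :=
    Set.monotone_accumulate.comp fun _ _ hij ↦ Nat.mul_le_mul_left n hij
  have hmeas (i : ℕ) : NullMeasurableSet (Set.accumulate A (n * i)) μ :=
    .biUnion (Set.to_countable _) fun k _ ↦ hA k
  have hgrow (i : ℕ) (hi : i < c) :
      a - b ≤ μ (Set.accumulate A (n * (i + 1)) \ Set.accumulate A (n * i)) :=
    tsub_le_measure_accumulate_sdiff (ha _ (Nat.mul_le_mul_left n hi))
      (measure_accumulate_inter_le h (n * i))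
  refine hc.not_ge ?_
  calc a + c * (a - b) ≤ μ (Set.accumulate A (n * 0)) + c * (a - b) := by
        gcongr
        exact (ha 0 (Nat.zero_le _)).trans (measure_mono Set.subset_accumulate)
    _ ≤ μ (Set.accumulate A (n * c)) :=
      measure_zero_add_mul_le_of_le_measure_sdiff hmono hmeas hgrow
    _ ≤ μ Set.univ := measure_mono (Set.subset_univ _)

end

theorem ofReal_le_toNat_ceil_div_mul_ofReal (x : ℝ) {d : ℝ} (hd : 0 < d) :
    ENNReal.ofReal x ≤ ⌈x / d⌉.toNat * ENNReal.ofReal d := by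
  rw [← ENNReal.ofReal_natCast, ← ENNReal.ofReal_mul (Nat.cast_nonneg _), Int.ceil_toNat]
  exact ENNReal.ofReal_le_ofReal ((div_le_iff₀ hd).1 (Nat.le_ceil _))

theorem stmt_8 (n : ℕ) (lam lam' : ℝ) (h1 : lam' < lam) (h2 : 0 < lam')
    (X : Type*) [MeasurableSpace X] (μ : Measure X) [IsProbabilityMeasure μ]
    (A : ℕ → Set X) (hA : ∀ k, MeasurableSet (A k))
    (hyp : ∀ F : ℕ → ℕ,
      μ (⋂ m ≤ F 0 + n, ⋃ k ∈ Set.Icc m (F m), A k) < ENNReal.ofReal lam') :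
    ∃ k ≤ n * ⌈1 / (lam - lam')⌉.toNat, μ (A k) < ENNReal.ofReal lam := by
  refine stmt_8_general (fun k ↦ (hA k).nullMeasurableSet) (fun F ↦ (hyp F).le) ?_
  rw [measure_univ, ← ENNReal.ofReal_sub lam h2.le, ← ENNReal.ofReal_one, add_comm]
  exact (ofReal_le_toNat_ceil_div_mul_ofReal 1 (sub_pos.2 h1)).trans_lt
    (ENNReal.lt_add_right (by finiteness) (by simpa using h2.trans h1))
end

section
/- Fix n ∈ ℕ with n ≥ 1 and reals 1 > λ > λ' > 0, and let M : (ℕ → ℕ) → ℕ be the functional M(F) = F(0) + n. Then there exist a probability space (X, B, μ) and a sequence (A_k) of measurable subsets of X such that for every function F : ℕ → ℕ one has μ(⋂_{m ≤ M(F)} ⋃_{k ∈ [m, F(m)]} A_k) < λ', and yet μ(A_k) ≥ λ for every k < n · (⌈(1 − λ')/(λ − λ')⌉ − 1). -/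
open MeasureTheory

/-!
Take a sunflower of subsets of `[0, 1)`: a core `[0, c)` of measure `c` slightly below `λ'`, and
consecutive disjoint petals of length `λ - c` next to it, and let `A k` be the core together with
the petal of index `k / n`. A point of `⋂ m ≤ F 0 + n, ⋃ k ∈ [m, F m], A k` lies in some `A i` with
`i ≤ F 0` and in some `A j` with `j ≥ F 0 + n`; these use different petals, so the point lies in the
core. The largest integer `K` with `λ' + K (λ - λ') < 1` is `⌈(1 - λ') / (λ - λ')⌉ - 1`, and this
strict inequality survives when `λ'` is replaced by a slightly smaller `c`, so that `K` petals fit.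
-/

open Set Filter Topology

theorem iInter_biUnion_Icc_subset_of_inter_subset {α : Type*} {A : ℕ → Set α} {C : Set α} {n : ℕ}
    (hA : ∀ i j, i + n ≤ j → A i ∩ A j ⊆ C) (F : ℕ → ℕ) :
    (⋂ m ≤ F 0 + n, ⋃ k ∈ Icc m (F m), A k) ⊆ C := by
  intro x hx
  simp only [mem_iInter, mem_iUnion] at hx
  obtain ⟨i, hi, hxi⟩ := hx 0 (Nat.zero_le _)
  obtain ⟨j, hj, hxj⟩ := hx (F 0 + n) le_rfl
  exact hA i j ((Nat.add_le_add_right hi.2 n).trans hj.1) ⟨hxi, hxj⟩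

theorem div_lt_div_of_add_le {n i j : ℕ} (hn : 0 < n) (hij : i + n ≤ j) : i / n < j / n :=
  calc i / n < i / n + 1 := Nat.lt_succ_self _
    _ = (i + n) / n := (Nat.add_div_right i hn).symm
    _ ≤ j / n := Nat.div_le_div_right hij

theorem cast_div_add_one_le {R : Type*} [Ring R] [PartialOrder R] [IsOrderedRing R] {n k : ℕ}
    {K : ℤ} (hn : 0 < n) (hk : (k : ℤ) < n * K) :
    ((k / n : ℕ) : R) + 1 ≤ K := by
  have hdiv : (k : ℤ) / n < K :=
    Int.ediv_lt_of_lt_mul (by exact_mod_cast hn) (by rwa [mul_comm] at hk)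
  calc ((k / n : ℕ) : R) + 1 = (((k : ℤ) / n + 1 : ℤ) : R) := by
        rw [← Int.natCast_div, Int.cast_add, Int.cast_natCast, Int.cast_one]
    _ ≤ K := Int.cast_mono (Int.add_one_le_of_lt hdiv)

theorem add_ceil_sub_one_mul_lt_one {R : Type*} [Field R] [LinearOrder R] [IsStrictOrderedRing R]
    [FloorRing R] {a b : R} (hab : a < b) :
    a + ((⌈(1 - a) / (b - a)⌉ - 1 : ℤ) : R) * (b - a) < 1 := by
  have hceil : ((⌈(1 - a) / (b - a)⌉ - 1 : ℤ) : R) < (1 - a) / (b - a) :=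
    Int.lt_ceil.1 (sub_one_lt _)
  linarith [(lt_div_iff₀ (sub_pos.2 hab)).1 hceil]

theorem exists_mem_Ioo_lt_of_continuousWithinAt {α β : Type*} [LinearOrder α] [TopologicalSpace α]
    [OrderTopology α] [DenselyOrdered α] [LinearOrder β] [TopologicalSpace β]
    [ClosedIciTopology β] {f : α → β} {a b : α} {s : β} (hab : a < b)
    (hf : ContinuousWithinAt f (Iio b) b) (hs : f b < s) : ∃ c ∈ Ioo a b, f c < s := by
  have : (𝓝[<] b).NeBot := nhdsLT_neBot_of_exists_lt ⟨a, hab⟩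
  have hmem : ∀ᶠ c in 𝓝[<] b, c ∈ Ioo a b := Ioo_mem_nhdsLT hab
  exact (hmem.and (hf.eventually_lt_const hs)).exists

/-- The `j`-th of the consecutive half-open intervals of length `d` that start at `c`. -/
def petal (c d : ℝ) (j : ℕ) : Set ℝ := Ico (c + j * d) (c + (j + 1) * d)

/-- The `j`-th member of the sunflower with core `[0, c)` and petals of length `d`: distinct
members meet exactly in the core. -/
def sunflower (c d : ℝ) (j : ℕ) : Set ℝ := Ico 0 c ∪ petal c d j

section Sunflower

variable {c d : ℝ}

theorem pairwise_disjoint_petal (hd : 0 ≤ d) :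
    Pairwise (Function.onFun Disjoint (petal c d)) := by
  have hmono : Monotone fun j : ℕ ↦ c + j * d := fun i j hij ↦ by dsimp only; gcongr
  intro i j hij
  simpa only [Function.onFun, petal, Order.succ_eq_add_one, Nat.cast_add_one]
    using hmono.pairwise_disjoint_on_Ico_succ hij

theorem sunflower_inter_sunflower (hd : 0 ≤ d) {i j : ℕ} (hij : i ≠ j) :
    sunflower c d i ∩ sunflower c d j = Ico 0 c := by
  rw [sunflower, sunflower, ← union_inter_distrib_left,
    (pairwise_disjoint_petal hd hij).inter_eq, union_empty]

theorem measurableSet_sunflower (j : ℕ) : MeasurableSet (sunflower c d j) :=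
  measurableSet_Ico.union measurableSet_Ico

theorem disjoint_Ico_petal (hd : 0 ≤ d) (j : ℕ) : Disjoint (Ico 0 c) (petal c d j) :=
  Ico_disjoint_Ico.2 <| (min_le_left _ _).trans <|
    (le_add_of_nonneg_right (by positivity)).trans (le_max_right _ _)

theorem volume_petal (j : ℕ) : volume (petal c d j) = ENNReal.ofReal d := by
  rw [petal, Real.volume_Ico]
  ring_nf

theorem volume_sunflower (hc : 0 ≤ c) (hd : 0 ≤ d) (j : ℕ) :
    volume (sunflower c d j) = ENNReal.ofReal (c + d) := by
  rw [sunflower, measure_union (disjoint_Ico_petal hd j) measurableSet_Ico, volume_petal,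
    Real.volume_Ico, sub_zero, ENNReal.ofReal_add hc hd]

theorem sunflower_subset_Ico (hc : 0 ≤ c) (hd : 0 ≤ d) (j : ℕ) :
    sunflower c d j ⊆ Ico 0 (c + (j + 1) * d) :=
  union_subset (Ico_subset_Ico_right (le_add_of_nonneg_right (by positivity)))
    (Ico_subset_Ico_left (by positivity))

end Sunflower

theorem stmt_9 (n : ℕ) (hn : 1 ≤ n) (lam lam' : ℝ)
    (h0 : 0 < lam') (h1 : lam' < lam) (h2 : lam < 1) :
    ∃ (X : Type) (_ : MeasurableSpace X) (μ : Measure X),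
      IsProbabilityMeasure μ ∧
      ∃ A : ℕ → Set X, (∀ k, MeasurableSet (A k)) ∧
        (∀ F : ℕ → ℕ,
          μ (⋂ m ≤ F 0 + n, ⋃ k ∈ Set.Icc m (F m), A k) < ENNReal.ofReal lam') ∧
        (∀ k : ℕ, (k : ℤ) < (n : ℤ) * (⌈(1 - lam') / (lam - lam')⌉ - 1) →
          ENNReal.ofReal lam ≤ μ (A k)) := by
  obtain ⟨c, ⟨hc0, hc⟩, hfit⟩ := exists_mem_Ioo_lt_of_continuousWithinAt h0
    (f := fun c ↦ c + ((⌈(1 - lam') / (lam - lam')⌉ - 1 : ℤ) : ℝ) * (lam - c)) (by fun_prop)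
    (add_ceil_sub_one_mul_lt_one h1)
  have hd : 0 ≤ lam - c := by linarith
  refine ⟨ℝ, inferInstance, volume.restrict (Ico 0 1), ⟨by simp⟩,
    fun k ↦ sunflower c (lam - c) (k / n), fun k ↦ measurableSet_sunflower _,
    fun F ↦ ?_, fun k hk ↦ ?_⟩
  · have hcore := iInter_biUnion_Icc_subset_of_inter_subset (fun i j hij ↦
      (sunflower_inter_sunflower (c := c) hd (div_lt_div_of_add_le hn hij).ne).subset) F
    calc _ ≤ volume.restrict (Ico 0 1) (Ico 0 c) := measure_mono hcore
      _ ≤ volume (Ico 0 c) := Measure.restrict_apply_le _ _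
      _ = ENNReal.ofReal c := by rw [Real.volume_Ico, sub_zero]
      _ < ENNReal.ofReal lam' := (ENNReal.ofReal_lt_ofReal_iff h0).2 hc
  · have hle : c + ((k / n : ℕ) + 1) * (lam - c) ≤ 1 :=
      (add_le_add_right (mul_le_mul_of_nonneg_right (cast_div_add_one_le hn hk) hd) c).trans hfit.le
    have hsub := (sunflower_subset_Ico hc0.le hd (k / n)).trans (Ico_subset_Ico_right hle)
    rw [Measure.restrict_eq_self _ hsub, volume_sunflower hc0.le hd, add_sub_cancel]
end

section
/- For every ε > 0, reals λ > λ' > 0, and functional M₁ : (ℕ → ℕ) → ℕ, there exists a functional M₂ : (ℕ → ℕ) → ℕ with the following property: for every probability space (X, B, μ) and every sequence (f_n) of measurable real-valued functions on X, if for every F₁ : ℕ → ℕ one has μ({x : ∃ m ≤ M₁(F₁), ∀ n, n' ∈ [m, F₁(m)], |f_n(x) − f_{n'}(x)| < ε}) > 1 − λ', then for every F₂ : ℕ → ℕ there is an m ≤ M₂(F₂) such that μ({x : ∀ n, n' ∈ [m, F₂(m)], |f_n(x) − f_{n'}(x)| < ε}) > 1 − λ. -/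
open MeasureTheory

/-!
Fix `F₂`. If no bound on `m` worked, there would be counterexamples `f i` on spaces `X i`, one for
each bound `i`, in which the failure events `S i n` of `|f_n - f_n'| < ε` on `[n, F₂ n]` satisfy
`μ i (S i n) ≥ λ` as soon as `n ≤ i`. Take a nonprincipal ultrafilter on the indices `i`. Adding
events greedily, one finds for each `m` finitely many events `S i (m + j)`, `j ∈ s m`, with `s m`
independent of `i`, whose union covers each later event up to an error `δ m`, for almost all `i`
in the sense of the ultrafilter: otherwise the measure of the union could be increased by `δ m`
indefinitely. Hence for each `K` and some `i`, the unions with `m ≤ K` occur simultaneously, up to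
an error `∑ δ m ≤ λ - λ'`, wherever `S i K` does, so on a set of measure at least `λ'`. With `F₁ m`
the maximum of `F₂ (m + j)` over `j ∈ s m` and `K = M₁ F₁`, no interval `[m, F₁ m]` with `m ≤ K` is
good on this set, which contradicts the hypothesis on `F₁`.
-/

theorem measureReal_le_biInter_add_sum_sdiff {X ι : Type*} [MeasurableSpace X] (μ : Measure X)
    [IsFiniteMeasure μ] (A : Set X) (V : ι → Set X) (s : Finset ι) :
    μ.real A ≤ μ.real (⋂ i ∈ s, V i) + ∑ i ∈ s, μ.real (A \ V i) := by
  have hA : A ⊆ (⋂ i ∈ s, V i) ∪ ⋃ i ∈ s, A \ V i := by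
    intro x hx
    by_cases hV : ∀ i ∈ s, x ∈ V i
    · exact .inl (Set.mem_iInter₂.2 hV)
    · push Not at hV
      obtain ⟨i, hi, hxi⟩ := hV
      exact .inr (Set.mem_biUnion hi ⟨hx, hxi⟩)
  calc μ.real A ≤ μ.real ((⋂ i ∈ s, V i) ∪ ⋃ i ∈ s, A \ V i) := measureReal_mono hA
    _ ≤ μ.real (⋂ i ∈ s, V i) + μ.real (⋃ i ∈ s, A \ V i) := measureReal_union_le _ _
    _ ≤ _ := by gcongr; exact measureReal_biUnion_finset_le s _

section Ultrafilter

variable {ι : Type*} (U : Ultrafilter ι) {X : ι → Type*} [∀ i, MeasurableSpace (X i)]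
  (μ : ∀ i, Measure (X i))

theorem exists_finset_eventually_measureReal_sdiff_lt [∀ i, IsFiniteMeasure (μ i)] {C : ℝ}
    (hC : ∀ i, (μ i).real Set.univ ≤ C) {κ : Type*} {E : ∀ i, κ → Set (X i)}
    (hE : ∀ i n, NullMeasurableSet (E i n) (μ i)) {δ : ℝ} (hδ : 0 < δ) :
    ∃ s : Finset κ, ∀ n, ∀ᶠ i in U, (μ i).real (E i n \ ⋃ j ∈ s, E i j) < δ := by
  classical
  by_contra! hgrow
  have hlarge (k : ℕ) : ∃ s : Finset κ, ∀ᶠ i in U, k * δ ≤ (μ i).real (⋃ j ∈ s, E i j) := by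
    induction k with
    | zero => exact ⟨∅, by simp⟩
    | succ k ih =>
      obtain ⟨s, hs⟩ := ih
      obtain ⟨n, hn⟩ := hgrow s
      refine ⟨insert n s, ?_⟩
      filter_upwards [hs, hn] with i hsi hni
      have hunion : NullMeasurableSet (⋃ j ∈ s, E i j) (μ i) :=
        s.nullMeasurableSet_biUnion fun j _ ↦ hE i j
      rw [Finset.set_biUnion_insert, Set.union_comm, ← Set.union_sdiff_self,
        measureReal_union₀' hunion disjoint_sdiff_self_right.aedisjoint (measure_ne_top _ _)
          (measure_ne_top _ _)]
      push_cast
      linarith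
  obtain ⟨k, hk⟩ := exists_nat_gt (C / δ)
  obtain ⟨s, hs⟩ := hlarge k
  obtain ⟨i, hi⟩ := hs.exists
  have hle : k * δ ≤ C := hi.trans ((measureReal_mono (Set.subset_univ _)).trans (hC i))
  exact ((div_lt_iff₀ hδ).1 hk).not_ge hle

theorem exists_finset_eventually_le_measureReal_biInter_biUnion [∀ i, IsFiniteMeasure (μ i)]
    {C : ℝ} (hC : ∀ i, (μ i).real Set.univ ≤ C) {E : ∀ i, ℕ → Set (X i)}
    (hE : ∀ i n, NullMeasurableSet (E i n) (μ i)) {a b : ℝ} (hab : a < b)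
    (hb : ∀ n, ∀ᶠ i in U, b ≤ (μ i).real (E i n)) :
    ∃ s : ℕ → Finset ℕ, ∀ K, ∀ᶠ i in U,
      a ≤ (μ i).real (⋂ m ∈ Finset.range (K + 1), ⋃ j ∈ s m, E i (m + j)) := by
  obtain ⟨δ, hδ, hδsum⟩ :=
    (Set.to_countable (Set.univ : Set ℕ)).exists_pos_forall_sum_le (sub_pos.2 hab)
  choose s hs using fun m ↦ exists_finset_eventually_measureReal_sdiff_lt U μ hC
    (E := fun i j ↦ E i (m + j)) (fun i j ↦ hE i (m + j)) (hδ m)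
  refine ⟨s, fun K ↦ ?_⟩
  have hcover : ∀ᶠ i in U, ∀ m ∈ Finset.range (K + 1),
      (μ i).real (E i K \ ⋃ j ∈ s m, E i (m + j)) < δ m := by
    refine (Filter.eventually_all_finset _).2 fun m hm ↦ ?_
    have := hs m (K - m)
    rwa [Nat.add_sub_cancel' (Finset.mem_range_succ_iff.1 hm)] at this
  filter_upwards [hb K, hcover] with i hbi hi
  have hsplit := measureReal_le_biInter_add_sum_sdiff (μ i) (E i K)
    (fun m ↦ ⋃ j ∈ s m, E i (m + j)) (Finset.range (K + 1))
  have herror := (Finset.sum_le_sum fun m hm ↦ (hi m hm).le).trans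
    (hδsum (Finset.range (K + 1)) (Set.subset_univ _))
  linarith

end Ultrafilter

/-- The event that the sequence `f` fluctuates by less than `ε` on the interval `[m, N]`. It is
everything when `N < m`. -/
def stableSet {X E : Type*} [PseudoMetricSpace E] (ε : ℝ) (f : ℕ → X → E) (m N : ℕ) : Set X :=
  {x | ∀ n ∈ Set.Icc m N, ∀ n' ∈ Set.Icc m N, dist (f n x) (f n' x) < ε}

theorem stableSet_subset_stableSet {X E : Type*} [PseudoMetricSpace E] (ε : ℝ) (f : ℕ → X → E)
    {m m' N N' : ℕ} (hm : m ≤ m') (hN : N' ≤ N) : stableSet ε f m N ⊆ stableSet ε f m' N' :=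
  fun _ hx n hn n' hn' ↦
    hx n (Set.Icc_subset_Icc hm hN hn) n' (Set.Icc_subset_Icc hm hN hn')

theorem nullMeasurableSet_stableSet {X E : Type*} [MeasurableSpace X] {μ : Measure X}
    [PseudoMetricSpace E] (ε : ℝ) {f : ℕ → X → E} (hf : ∀ n, AEStronglyMeasurable (f n) μ)
    (m N : ℕ) : NullMeasurableSet (stableSet ε f m N) μ := by
  simp only [stableSet, Set.ofPred_forall]
  exact .iInter fun n ↦ .iInter fun _ ↦ .iInter fun n' ↦ .iInter fun _ ↦
    nullMeasurableSet_lt ((hf n).dist (hf n')).aemeasurable aemeasurable_const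

theorem exists_eventually_lt_measureReal_stableSet {ι : Type*} (U : Ultrafilter ι)
    {X E : ι → Type*} [∀ i, MeasurableSpace (X i)] [∀ i, PseudoMetricSpace (E i)]
    (μ : ∀ i, Measure (X i)) [∀ i, IsProbabilityMeasure (μ i)] {f : ∀ i, ℕ → X i → E i}
    (hf : ∀ i n, AEStronglyMeasurable (f i n) (μ i)) {ε lam lam' : ℝ} (hlam : lam' < lam)
    (hrate : ∀ F : ℕ → ℕ, ∃ K, ∀ᶠ i in U,
      1 - lam' < (μ i).real {x | ∃ m ≤ K, x ∈ stableSet ε (f i) m (F m)})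
    (F : ℕ → ℕ) :
    ∃ m, ∀ᶠ i in U, 1 - lam < (μ i).real (stableSet ε (f i) m (F m)) := by
  by_contra! hfail
  have hstable (G : ℕ → ℕ) (i : ι) (m : ℕ) :
      NullMeasurableSet (stableSet ε (f i) m (G m)) (μ i) :=
    nullMeasurableSet_stableSet ε (hf i) m (G m)
  have hcompl (m : ℕ) : ∀ᶠ i in U, lam ≤ (μ i).real (stableSet ε (f i) m (F m))ᶜ := by
    filter_upwards [hfail m] with i hi
    rw [probReal_compl_eq_one_sub₀ (hstable F i m)]
    linarith
  obtain ⟨s, hs⟩ := exists_finset_eventually_le_measureReal_biInter_biUnion U μ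
    (fun _ ↦ measureReal_le_one) (fun i m ↦ (hstable F i m).compl) hlam hcompl
  let G (m : ℕ) : ℕ := (s m).sup fun j ↦ F (m + j)
  obtain ⟨K, hK⟩ := hrate G
  obtain ⟨i, hbad, hgood⟩ := ((hs K).and hK).exists
  let good : Set (X i) := {x | ∃ m ≤ K, x ∈ stableSet ε (f i) m (G m)}
  have hmeas : NullMeasurableSet good (μ i) := by
    simp only [good, Set.ofPred_exists, Set.ofPred_and]
    exact .iUnion fun m ↦ (NullMeasurableSet.const _).inter (hstable G i m)
  have hdisjoint : ⋂ m ∈ Finset.range (K + 1),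
      ⋃ j ∈ s m, (stableSet ε (f i) (m + j) (F (m + j)))ᶜ ⊆ goodᶜ := by
    rintro x hx ⟨m, hm, hxm⟩
    obtain ⟨j, hj, hxj⟩ := Set.mem_iUnion₂.1
      (Set.mem_iInter₂.1 hx m (Finset.mem_range_succ_iff.2 hm))
    exact hxj (stableSet_subset_stableSet ε (f i) (Nat.le_add_right m j)
      (Finset.le_sup (f := fun j ↦ F (m + j)) hj) hxm)
  have hle := hbad.trans (measureReal_mono hdisjoint)
  rw [probReal_compl_eq_one_sub₀ hmeas] at hle
  linarith

theorem stmt_10_general.{u, v} (ε lam lam' : ℝ) (hlam : lam' < lam) (M₁ : (ℕ → ℕ) → ℕ) :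
    ∃ M₂ : (ℕ → ℕ) → ℕ, ∀ (X : Type u) (_ : MeasurableSpace X) (μ : Measure X),
      IsProbabilityMeasure μ → ∀ (E : Type v) (_ : PseudoMetricSpace E) (f : ℕ → X → E),
      (∀ n, AEStronglyMeasurable (f n) μ) →
      (∀ F₁ : ℕ → ℕ, 1 - lam' < μ.real {x | ∃ m ≤ M₁ F₁, x ∈ stableSet ε f m (F₁ m)}) →
      ∀ F₂ : ℕ → ℕ, ∃ m ≤ M₂ F₂, 1 - lam < μ.real (stableSet ε f m (F₂ m)) := by
  suffices hbound : ∀ F₂ : ℕ → ℕ, ∃ B : ℕ, ∀ (X : Type u) (_ : MeasurableSpace X) (μ : Measure X),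
      IsProbabilityMeasure μ → ∀ (E : Type v) (_ : PseudoMetricSpace E) (f : ℕ → X → E),
      (∀ n, AEStronglyMeasurable (f n) μ) →
      (∀ F₁ : ℕ → ℕ, 1 - lam' < μ.real {x | ∃ m ≤ M₁ F₁, x ∈ stableSet ε f m (F₁ m)}) →
      ∃ m ≤ B, 1 - lam < μ.real (stableSet ε f m (F₂ m)) by
    choose M₂ hM₂ using hbound
    exact ⟨M₂, fun X _ μ hμ E _ f hf hrate F₂ ↦ hM₂ F₂ X _ μ hμ E _ f hf hrate⟩
  intro F₂
  by_contra! hcounter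
  choose X mX μ hμ E dE f hf hrate hfail using hcounter
  obtain ⟨m, hm⟩ := exists_eventually_lt_measureReal_stableSet (Filter.hyperfilter ℕ) μ hf hlam
    (fun F₁ ↦ ⟨M₁ F₁, .of_forall fun i ↦ hrate i F₁⟩) F₂
  have hlarge : ∀ᶠ i in (Filter.hyperfilter ℕ : Filter ℕ), m ≤ i :=
    (Filter.eventually_ge_atTop m).filter_mono Nat.hyperfilter_le_atTop
  obtain ⟨i, hmi, hi⟩ := (hlarge.and hm).exists
  exact (hfail i m hmi).not_gt hi

theorem stmt_10 (ε lam lam' : ℝ) (hε : 0 < ε) (h1 : lam' < lam) (h2 : 0 < lam')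
    (M₁ : (ℕ → ℕ) → ℕ) :
    ∃ M₂ : (ℕ → ℕ) → ℕ, ∀ (X : Type) (_ : MeasurableSpace X) (μ : Measure X),
      IsProbabilityMeasure μ → ∀ f : ℕ → X → ℝ, (∀ n, Measurable (f n)) →
      (∀ F₁ : ℕ → ℕ,
        (μ {x | ∃ m ≤ M₁ F₁, ∀ n ∈ Set.Icc m (F₁ m), ∀ n' ∈ Set.Icc m (F₁ m),
            |f n x - f n' x| < ε}).toReal > 1 - lam') →
      ∀ F₂ : ℕ → ℕ, ∃ m ≤ M₂ F₂,
        (μ {x | ∀ n ∈ Set.Icc m (F₂ m), ∀ n' ∈ Set.Icc m (F₂ m),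
            |f n x - f n' x| < ε}).toReal > 1 - lam := by
  obtain ⟨M₂, hM₂⟩ := stmt_10_general ε lam lam' h1 M₁
  exact ⟨M₂, fun X _ μ hμ f hf ↦ hM₂ X _ μ hμ ℝ _ f fun n ↦ (hf n).aestronglyMeasurable⟩
end

section
/- For every ε > 0, reals λ > λ' > 0, and functional M₁ : (ℕ → ℕ) → ℕ, there exists a functional M₂ : (ℕ → ℕ) → ℕ with the following property: for every probability space (X, B, μ) and every sequence (f_n) of measurable functions on X with 0 ≤ f_n(x) ≤ 1 for all n and x, if for every F : ℕ → ℕ one has μ({x : ∃ m ≤ M₁(F), ∀ n, n' ∈ [m, F(m)], |f_n(x) − f_{n'}(x)| < ε}) > 1 − λ', then for every F : ℕ → ℕ there is an m ≤ M₂(F) such that |∫ f_n dμ − ∫ f_{n'} dμ| < ε + λ for all n, n' ∈ [m, F(m)]. -/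
/-!
Fix `F`. For sets `A m k`, antitone in `m` and monotone in `k`, the hypothesis only enters through
the numbers `q m k = μ (A m k)`: if `⋂ m ≤ N, A m (G m)` has measure less than `c`, where
`N = M₁ G`, then `q N k < c + ∑ m ≤ N, (q m k - q m (G m))` for all large `k`. If `G m` nearly
maximises row `m` of `q`, the sum is small, so `q N (F N)` is below any prescribed `d > c`. As only
finitely many entries of `q` are involved, the same `N` serves all nearby arrays, and compactness of
the space of bounded arrays makes the bound on `N` uniform over all probability spaces. For `A m k`
the set where the sequence oscillates by at least `ε` on `[m, k]`, this controls the integrals.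
-/

open MeasureTheory Set Filter Topology

universe u v

section Profile

lemma exists_forall_sum_sub_lt {ι κ : Type*} [Countable ι] [Nonempty κ] {p : ι → κ → ℝ}
    (hp : ∀ i, BddAbove (range (p i))) {δ : ℝ} (hδ : 0 < δ) :
    ∃ G : ι → κ, ∀ (t : Finset ι) (k : ι → κ), ∑ i ∈ t, (p i (k i) - p i (G i)) < δ := by
  obtain ⟨η, hη_pos, hη_sum⟩ := (countable_univ (α := ι)).exists_pos_forall_sum_le (half_pos hδ)
  have near_max (i : ι) : ∃ g, (⨆ k, p i k) - η i < p i g :=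
    exists_lt_of_lt_ciSup (sub_lt_self _ (hη_pos i))
  choose G hG using near_max
  refine ⟨G, fun t k => ?_⟩
  calc ∑ i ∈ t, (p i (k i) - p i (G i)) ≤ ∑ i ∈ t, η i :=
        Finset.sum_le_sum fun i _ => by linarith [hG i, le_ciSup (hp i) (k i)]
    _ ≤ δ / 2 := hη_sum t (subset_univ _)
    _ < δ := half_lt_self hδ

/-- The inequalities satisfied by the array `q m k = μ (A m k)` when `A` is antitone in `m` and
monotone in `k` and `⋂ m ≤ M₁ G, A m (G m)` has measure less than `c` for every `G`. They are all
that the compactness argument needs to know about `μ` and `A`. -/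
structure IsMetastableProfile (M₁ : (ℕ → ℕ) → ℕ) (c : ℝ) (q : ℕ → ℕ → ℝ) : Prop where
  monotone (m : ℕ) : Monotone (q m)
  lt_add_sum (G : ℕ → ℕ) (k : ℕ) (hk : ∀ m ≤ M₁ G, G m ≤ k) :
    q (M₁ G) k < c + ∑ m ∈ Finset.Iic (M₁ G), (q m k - q m (G m))

variable {c d : ℝ} (hcd : c < d) (M₁ : (ℕ → ℕ) → ℕ) (F : ℕ → ℕ)
include hcd

lemma exists_eventually_isMetastableProfile_imp_lt {p : ℕ → ℕ → ℝ}
    (hp : ∀ m, BddAbove (range (p m))) :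
    ∃ N, ∀ᶠ q in 𝓝 p, IsMetastableProfile M₁ c q → q N (F N) < d := by
  obtain ⟨G, hG⟩ := exists_forall_sum_sub_lt hp (sub_pos.2 hcd)
  set N := M₁ G
  set k := F N ⊔ (Finset.Iic N).sup G
  have continuous_sum :
      Continuous fun q : ℕ → ℕ → ℝ => ∑ m ∈ Finset.Iic N, (q m k - q m (G m)) := by
    fun_prop
  refine ⟨N, ?_⟩
  filter_upwards [continuous_sum.continuousAt.eventually_lt_const (hG _ fun _ => k)]
    with q sum_lt hq
  calc q N (F N) ≤ q N k := hq.monotone N le_sup_left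
    _ < c + ∑ m ∈ Finset.Iic N, (q m k - q m (G m)) :=
        hq.lt_add_sum G k fun m hm => (Finset.le_sup (Finset.mem_Iic.2 hm)).trans le_sup_right
    _ < d := by linarith

lemma exists_forall_isMetastableProfile_exists_le_lt (a b : ℝ) :
    ∃ M, ∀ q : ℕ → ℕ → ℝ, (∀ m k, q m k ∈ Icc a b) → IsMetastableProfile M₁ c q →
      ∃ m ≤ M, q m (F m) < d := by
  have isCompact_arrays : IsCompact (Icc (fun _ _ => a) fun _ _ => b : Set (ℕ → ℕ → ℝ)) :=
    isCompact_Icc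
  obtain ⟨M, hM⟩ : ∃ M, ∀ q ∈ (Icc (fun _ _ => a) fun _ _ => b : Set (ℕ → ℕ → ℝ)),
      IsMetastableProfile M₁ c q → ∃ m ≤ M, q m (F m) < d := by
    refine isCompact_arrays.induction_on ⟨0, by simp⟩ ?mono ?union ?nhds
    case mono => exact fun s t hst ⟨M, hM⟩ => ⟨M, fun q hq => hM q (hst hq)⟩
    case union =>
      rintro s t ⟨M, hM⟩ ⟨M', hM'⟩
      refine ⟨M ⊔ M', fun q hqst hq => ?_⟩
      rcases hqst with hqs | hqt
      · exact (hM q hqs hq).imp fun m hm => ⟨le_sup_of_le_left hm.1, hm.2⟩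
      · exact (hM' q hqt hq).imp fun m hm => ⟨le_sup_of_le_right hm.1, hm.2⟩
    case nhds =>
      intro p hp
      have bddAbove_row (m : ℕ) : BddAbove (range (p m)) := ⟨b, forall_mem_range.2 (hp.2 m)⟩
      obtain ⟨N, hN⟩ := exists_eventually_isMetastableProfile_imp_lt hcd M₁ F bddAbove_row
      exact ⟨_, mem_nhdsWithin_of_mem_nhds hN, N, fun q hq hq' => ⟨N, le_rfl, hq hq'⟩⟩
  exact ⟨M, fun q hq => hM q ⟨fun m k => (hq m k).1, fun m k => (hq m k).2⟩⟩

end Profile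

section Measure

variable {X : Type u} [MeasurableSpace X] {μ : Measure X} [IsFiniteMeasure μ]

lemma measureReal_le_measureReal_biInter_add_sum_sub {ι : Type*} {t : Finset ι} {s : Set X}
    {B C : ι → Set X} (hsB : ∀ i ∈ t, s ⊆ B i) (hCB : ∀ i ∈ t, C i ⊆ B i)
    (hC : ∀ i ∈ t, NullMeasurableSet (C i) μ) :
    μ.real s ≤ μ.real (⋂ i ∈ t, C i) + ∑ i ∈ t, (μ.real (B i) - μ.real (C i)) := by
  have cover : s ⊆ (⋂ i ∈ t, C i) ∪ ⋃ i ∈ t, B i \ C i := by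
    intro x hx
    by_cases hxC : x ∈ ⋂ i ∈ t, C i
    · exact Or.inl hxC
    · simp only [mem_iInter, not_forall] at hxC
      obtain ⟨i, hi, hxi⟩ := hxC
      exact Or.inr (mem_biUnion hi ⟨hsB i hi hx, hxi⟩)
  calc μ.real s ≤ μ.real (⋂ i ∈ t, C i) + μ.real (⋃ i ∈ t, B i \ C i) :=
        (measureReal_mono cover).trans (measureReal_union_le _ _)
    _ ≤ μ.real (⋂ i ∈ t, C i) + ∑ i ∈ t, μ.real (B i \ C i) := by
        gcongr
        exact measureReal_biUnion_finset_le _ _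
    _ = μ.real (⋂ i ∈ t, C i) + ∑ i ∈ t, (μ.real (B i) - μ.real (C i)) := by
        congr 1
        refine Finset.sum_congr rfl fun i hi => ?_
        rw [measureReal_def, measure_sdiff (hCB i hi) (hC i hi) (measure_ne_top μ _),
          ENNReal.toReal_sub_of_le (measure_mono (hCB i hi)) (measure_ne_top μ _)]
        rfl

lemma isMetastableProfile_measureReal {M₁ : (ℕ → ℕ) → ℕ} {c : ℝ} {A : ℕ → ℕ → Set X}
    (hA : ∀ m k, NullMeasurableSet (A m k) μ) (hA_anti : Antitone A)
    (hA_mono : ∀ m, Monotone (A m))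
    (hA_lt : ∀ G : ℕ → ℕ, μ.real (⋂ m ∈ Finset.Iic (M₁ G), A m (G m)) < c) :
    IsMetastableProfile M₁ c fun m k => μ.real (A m k) where
  monotone m _ _ h := measureReal_mono (hA_mono m h)
  lt_add_sum G k hk := by
    grw [← hA_lt G]
    exact measureReal_le_measureReal_biInter_add_sum_sub
      (fun m hm => hA_anti (Finset.mem_Iic.1 hm) k)
      (fun m hm => hA_mono m (hk m (Finset.mem_Iic.1 hm))) (fun m _ => hA m (G m))

lemma norm_integral_le_mul_add_mul_compl {E : Type*} [NormedAddCommGroup E] [NormedSpace ℝ E]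
    {g : X → E} {s : Set X} {a b : ℝ} (hg : Integrable g μ) (hs : NullMeasurableSet s μ)
    (ha : ∀ x ∈ s, ‖g x‖ ≤ a) (hb : ∀ x ∉ s, ‖g x‖ ≤ b) :
    ‖∫ x, g x ∂μ‖ ≤ a * μ.real s + b * μ.real sᶜ := by
  rw [← integral_add_compl₀ hs hg]
  exact norm_add_le_of_le (norm_setIntegral_le_of_norm_le_const (measure_lt_top μ s) ha)
    (norm_setIntegral_le_of_norm_le_const (measure_lt_top μ sᶜ) hb)

end Measure

section Oscillation

variable {X : Type u} {E : Type v}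

/-- The set of points at which the sequence `f` oscillates by at least `ε` on the interval
`[m, k]`. -/
def oscSet [PseudoMetricSpace E] (ε : ℝ) (f : ℕ → X → E) (m k : ℕ) : Set X :=
  {x | ∃ n ∈ Icc m k, ∃ n' ∈ Icc m k, ε ≤ dist (f n x) (f n' x)}

section PseudoMetricSpace

variable [PseudoMetricSpace E] (ε : ℝ) (f : ℕ → X → E)

lemma antitone_oscSet : Antitone (oscSet ε f) :=
  fun _ _ hm _ _ ⟨n, hn, n', hn', h⟩ =>
    ⟨n, Icc_subset_Icc_left hm hn, n', Icc_subset_Icc_left hm hn', h⟩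

lemma monotone_oscSet (m : ℕ) : Monotone (oscSet ε f m) :=
  fun _ _ hk _ ⟨n, hn, n', hn', h⟩ =>
    ⟨n, Icc_subset_Icc_right hk hn, n', Icc_subset_Icc_right hk hn', h⟩

lemma compl_biInter_oscSet (N : ℕ) (G : ℕ → ℕ) :
    (⋂ m ∈ Finset.Iic N, oscSet ε f m (G m))ᶜ =
      {x | ∃ m ≤ N, ∀ n ∈ Icc m (G m), ∀ n' ∈ Icc m (G m), dist (f n x) (f n' x) < ε} := by
  ext x
  simp [oscSet]

variable {ε f} in
lemma nullMeasurableSet_oscSet [MeasurableSpace X] {μ : Measure X}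
    (hf : ∀ n, AEStronglyMeasurable (f n) μ) (m k : ℕ) :
    NullMeasurableSet (oscSet ε f m k) μ := by
  have oscSet_eq : oscSet ε f m k =
      ⋃ n ∈ Icc m k, ⋃ n' ∈ Icc m k, {x | ε ≤ dist (f n x) (f n' x)} := by
    ext x
    simp only [oscSet, mem_ofPred_eq, mem_iUnion, exists_prop]
  rw [oscSet_eq]
  exact .biUnion (to_countable _) fun n _ => .biUnion (to_countable _) fun n' _ =>
    nullMeasurableSet_le aemeasurable_const ((hf n).dist (hf n')).aemeasurable

end PseudoMetricSpace

lemma dist_integral_le_add_mul_measureReal_oscSet [MeasurableSpace X] {μ : Measure X}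
    [IsProbabilityMeasure μ] [NormedAddCommGroup E] [NormedSpace ℝ E] {ε D : ℝ} (hε : 0 ≤ ε)
    {f : ℕ → X → E} (hf : ∀ n, Integrable (f n) μ) (hD : ∀ n n' x, dist (f n x) (f n' x) ≤ D)
    {m k n n' : ℕ} (hn : n ∈ Icc m k) (hn' : n' ∈ Icc m k) :
    dist (∫ x, f n x ∂μ) (∫ x, f n' x ∂μ) ≤ ε + D * μ.real (oscSet ε f m k) := by
  have small_outside (x : X) (hx : x ∉ oscSet ε f m k) : ‖f n x - f n' x‖ ≤ ε := by
    rw [← dist_eq_norm]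
    exact le_of_not_ge fun h => hx ⟨n, hn, n', hn', h⟩
  calc dist (∫ x, f n x ∂μ) (∫ x, f n' x ∂μ) = ‖∫ x, (f n x - f n' x) ∂μ‖ := by
        rw [dist_eq_norm, integral_sub (hf n) (hf n')]
    _ ≤ D * μ.real (oscSet ε f m k) + ε * μ.real (oscSet ε f m k)ᶜ :=
        norm_integral_le_mul_add_mul_compl ((hf n).sub (hf n'))
          (nullMeasurableSet_oscSet (fun n => (hf n).1) m k)
          (fun x _ => dist_eq_norm (f n x) (f n' x) ▸ hD n n' x) small_outside
    _ ≤ ε + D * μ.real (oscSet ε f m k) := by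
        rw [add_comm]
        gcongr
        exact mul_le_of_le_one_right hε measureReal_le_one

end Oscillation

theorem exists_metastable_bound_measureReal_oscSet {c d : ℝ} (hcd : c < d)
    (M₁ : (ℕ → ℕ) → ℕ) :
    ∃ M₂ : (ℕ → ℕ) → ℕ, ∀ (X : Type u) [MeasurableSpace X] (μ : Measure X)
      [IsProbabilityMeasure μ] (E : Type v) [PseudoMetricSpace E] (ε : ℝ) (f : ℕ → X → E),
      (∀ n, AEStronglyMeasurable (f n) μ) →
      (∀ G : ℕ → ℕ, 1 - c < μ.real {x | ∃ m ≤ M₁ G, ∀ n ∈ Icc m (G m), ∀ n' ∈ Icc m (G m),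
        dist (f n x) (f n' x) < ε}) →
      ∀ F : ℕ → ℕ, ∃ m ≤ M₂ F, μ.real (oscSet ε f m (F m)) < d := by
  choose M₂ hM₂ using fun F => exists_forall_isMetastableProfile_exists_le_lt hcd M₁ F 0 1
  refine ⟨M₂, fun X _ μ _ E _ ε f hf hM₁ F => hM₂ F (fun m k => μ.real (oscSet ε f m k))
    (fun m k => ⟨measureReal_nonneg, measureReal_le_one⟩) ?_⟩
  have hA (m k : ℕ) := nullMeasurableSet_oscSet (ε := ε) hf m k
  refine isMetastableProfile_measureReal hA (antitone_oscSet ε f) (monotone_oscSet ε f) fun G => ?_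
  have compl_gt := hM₁ G
  rw [← compl_biInter_oscSet, probReal_compl_eq_one_sub₀
    (Finset.nullMeasurableSet_biInter _ fun m _ => hA m (G m))] at compl_gt
  linarith

theorem stmt_11_general {lam lam' : ℝ} (hlam : lam' < lam) (M₁ : (ℕ → ℕ) → ℕ) :
    ∃ M₂ : (ℕ → ℕ) → ℕ, ∀ (X : Type u) [MeasurableSpace X] (μ : Measure X)
      [IsProbabilityMeasure μ] (E : Type v) [NormedAddCommGroup E] [NormedSpace ℝ E]
      [CompleteSpace E] (ε D : ℝ), 0 ≤ ε → 0 < D → ∀ f : ℕ → X → E, (∀ n, Integrable (f n) μ) →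
      (∀ n n' x, dist (f n x) (f n' x) ≤ D) →
      (∀ F : ℕ → ℕ, 1 - lam' < μ.real {x | ∃ m ≤ M₁ F, ∀ n ∈ Icc m (F m), ∀ n' ∈ Icc m (F m),
        dist (f n x) (f n' x) < ε}) →
      ∀ F : ℕ → ℕ, ∃ m ≤ M₂ F, ∀ n ∈ Icc m (F m), ∀ n' ∈ Icc m (F m),
        dist (∫ x, f n x ∂μ) (∫ x, f n' x ∂μ) < ε + D * lam := by
  obtain ⟨M₂, hM₂⟩ := exists_metastable_bound_measureReal_oscSet hlam M₁
  refine ⟨M₂, fun X _ μ _ E _ _ _ ε D hε hD f hf hfD hM₁ F => ?_⟩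
  obtain ⟨m, hm, osc_lt⟩ := hM₂ X μ E ε f (fun n => (hf n).1) hM₁ F
  refine ⟨m, hm, fun n hn n' hn' =>
    (dist_integral_le_add_mul_measureReal_oscSet hε hf hfD hn hn').trans_lt ?_⟩
  gcongr

theorem stmt_11 (ε lam lam' : ℝ) (hε : 0 < ε) (h1 : lam' < lam) (h2 : 0 < lam')
    (M₁ : (ℕ → ℕ) → ℕ) :
    ∃ M₂ : (ℕ → ℕ) → ℕ, ∀ (X : Type) (_ : MeasurableSpace X) (μ : Measure X),
      IsProbabilityMeasure μ → ∀ f : ℕ → X → ℝ, (∀ n, Measurable (f n)) →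
      (∀ n x, 0 ≤ f n x ∧ f n x ≤ 1) →
      (∀ F : ℕ → ℕ,
        (μ {x | ∃ m ≤ M₁ F, ∀ n ∈ Set.Icc m (F m), ∀ n' ∈ Set.Icc m (F m),
            |f n x - f n' x| < ε}).toReal > 1 - lam') →
      ∀ F : ℕ → ℕ, ∃ m ≤ M₂ F,
        ∀ n ∈ Set.Icc m (F m), ∀ n' ∈ Set.Icc m (F m),
          |∫ x, f n x ∂μ - ∫ x, f n' x ∂μ| < ε + lam := by
  obtain ⟨M₂, hM₂⟩ := stmt_11_general h1 M₁
  exact ⟨M₂, fun X _ μ _ f hf hf01 hM₁ => one_mul lam ▸ hM₂ X μ ℝ ε 1 hε.le one_pos f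
    (fun n => .of_mem_Icc 0 1 (hf n).aemeasurable (.of_forall (hf01 n)))
    (fun n n' x => Real.dist_le_of_mem_Icc_01 (hf01 n x) (hf01 n' x)) hM₁⟩
end

section
/- Let (f_n) be a sequence of measurable real-valued functions on a measure space (X, B, μ). If (f_n) converges almost uniformly, then (f_n) converges AUM. -/
open MeasureTheory

/-!
If every window `[m, F m]` with `m ≤ M` contains a large oscillation at `x`, then so does the window
starting at `M`, hence so does the tail from `M` on. Off a set of small measure the sequence is
uniformly Cauchy, so tails from a large `M`, chosen before `F`, do not oscillate there.
-/

section AlmostUniform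

open Filter
open scoped ENNReal Uniformity

variable {X E ι : Type*} [MeasurableSpace X] {μ : Measure X}

/-- Almost uniform convergence in its Cauchy form: `f` is uniformly Cauchy off sets of arbitrarily
small measure. These sets need not be measurable, but can be chosen so: see
`almostUniformCauchySeq_iff`. -/
def AlmostUniformCauchySeq [UniformSpace E] [Preorder ι] (f : ι → X → E) (μ : Measure X) : Prop :=
  ∀ δ : ℝ≥0∞, δ ≠ 0 → ∃ A : Set X, μ A ≤ δ ∧ UniformCauchySeqOn f atTop Aᶜ

theorem almostUniformCauchySeq_iff [PseudoMetricSpace E] [SemilatticeSup ι] [Nonempty ι]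
    {f : ι → X → E} :
    AlmostUniformCauchySeq f μ ↔ ∀ δ : ℝ, 0 < δ → ∃ A : Set X, MeasurableSet A ∧
      μ A ≤ ENNReal.ofReal δ ∧
      ∀ ε : ℝ, 0 < ε → ∃ m : ι, ∀ n n', m ≤ n → m ≤ n' →
        ∀ x ∈ Aᶜ, dist (f n x) (f n' x) < ε := by
  constructor
  · intro hf δ hδ
    obtain ⟨A, hμA, hA⟩ := hf (ENNReal.ofReal δ) (ENNReal.ofReal_pos.mpr hδ).ne'
    have hcauchy : UniformCauchySeqOn f atTop (toMeasurable μ A)ᶜ :=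
      hA.mono (Set.compl_subset_compl.mpr (subset_toMeasurable μ A))
    refine ⟨toMeasurable μ A, measurableSet_toMeasurable μ A,
      (measure_toMeasurable A).trans_le hμA, fun ε hε => ?_⟩
    obtain ⟨m, hm⟩ := Metric.uniformCauchySeqOn_iff.mp hcauchy ε hε
    exact ⟨m, fun n n' hn hn' => hm n hn n' hn'⟩
  · intro hf δ hδ
    obtain ⟨r, hr, hrδ⟩ := ENNReal.lt_iff_exists_nnreal_btwn.mp (pos_iff_ne_zero.mpr hδ)
    obtain ⟨A, -, hμA, hA⟩ := hf r (by exact_mod_cast hr)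
    refine ⟨A, hμA.trans (ENNReal.ofReal_coe_nnreal.trans_le hrδ.le),
      Metric.uniformCauchySeqOn_iff.mpr fun ε hε => ?_⟩
    obtain ⟨m, hm⟩ := hA ε hε
    exact ⟨m, fun n hn n' hn' => hm n n' hn hn'⟩

variable [UniformSpace E] [Preorder ι] [IsDirectedOrder ι] [Nonempty ι] {f : ι → X → E}

theorem AlmostUniformCauchySeq.exists_measure_tail_oscillation_lt
    (hf : AlmostUniformCauchySeq f μ) {δ : ℝ≥0∞} (hδ : δ ≠ 0) {V : Set (E × E)} (hV : V ∈ 𝓤 E) :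
    ∃ M : ι, μ {x | ∃ n ≥ M, ∃ n' ≥ M, (f n x, f n' x) ∉ V} < δ := by
  obtain ⟨η, hη, hηδ⟩ := exists_between (pos_iff_ne_zero.mpr hδ)
  obtain ⟨A, hμA, hA⟩ := hf η hη.ne'
  have htail : ∀ᶠ p : ι × ι in atTop, ∀ x ∈ Aᶜ, (f p.1 x, f p.2 x) ∈ V := by
    simpa only [prod_atTop_atTop_eq] using hA V hV
  obtain ⟨M, hM⟩ := eventually_atTop_prod_self'.mp htail
  have hsub : {x | ∃ n ≥ M, ∃ n' ≥ M, (f n x, f n' x) ∉ V} ⊆ A := by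
    rintro x ⟨n, hn, n', hn', hfar⟩
    by_contra hxA
    exact hfar (hM n hn n' hn' x hxA)
  exact ⟨M, ((measure_mono hsub).trans hμA).trans_lt hηδ⟩

theorem stmt_13_general (hf : AlmostUniformCauchySeq f μ) {δ : ℝ≥0∞} (hδ : δ ≠ 0)
    {V : Set (E × E)} (hV : V ∈ 𝓤 E) :
    ∃ M : ι, ∀ F : ι → ι,
      μ {x | ∀ m ≤ M, ∃ n ∈ Set.Icc m (F m), ∃ n' ∈ Set.Icc m (F m), (f n x, f n' x) ∉ V} < δ := by
  obtain ⟨M, hM⟩ := hf.exists_measure_tail_oscillation_lt hδ hV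
  refine ⟨M, fun F => (measure_mono fun x hx => ?_).trans_lt hM⟩
  obtain ⟨n, hn, n', hn', hfar⟩ := hx M le_rfl
  exact ⟨n, hn.1, n', hn'.1, hfar⟩

end AlmostUniform

theorem stmt_13 {X : Type*} [MeasurableSpace X] (μ : Measure X)
    (f : ℕ → X → ℝ) (hf : ∀ n, Measurable (f n))
    (hAU : ∀ lam : ℝ, 0 < lam → ∃ A : Set X, MeasurableSet A ∧
      μ A ≤ ENNReal.ofReal lam ∧
      ∀ ε : ℝ, 0 < ε → ∃ m : ℕ, ∀ n n', m ≤ n → m ≤ n' →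
        ∀ x ∈ Aᶜ, |f n x - f n' x| < ε) :
    ∀ lam : ℝ, 0 < lam → ∀ ε : ℝ, 0 < ε → ∀ F : ℕ → ℕ, ∃ M : ℕ,
      μ {x | ∀ m ≤ M, ∃ n ∈ Set.Icc m (F m), ∃ n' ∈ Set.Icc m (F m),
          ε ≤ |f n x - f n' x|} < ENNReal.ofReal lam := by
  intro lam hlam ε hε F
  have hcauchy : AlmostUniformCauchySeq f μ := almostUniformCauchySeq_iff.mpr hAU
  obtain ⟨M, hM⟩ :=
    stmt_13_general hcauchy (ENNReal.ofReal_pos.mpr hlam).ne' (Metric.dist_mem_uniformity hε)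
  exact ⟨M, by simpa only [Set.mem_ofPred_eq, Real.dist_eq, not_lt] using hM F⟩
end

section
/- Let (f_n) be a sequence of measurable real-valued functions on a measure space (X, B, μ) such that μ({x : |f_n(x) − f_{n'}(x)| ≥ ε}) < ∞ for every ε > 0 and all n, n'. If (f_n) converges pointwise almost everywhere (i.e., for almost every x the sequence (f_n(x)) is Cauchy), then (f_n) converges AUM. -/
open MeasureTheory

/-!
Fix `ε` and `F`. A point whose sequence of values is Cauchy is eventually in none of the sets `B m`
where the values indexed by `[m, F m]` fluctuate by at least `ε`, so `⋂ m, B m` is a null set.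
Each `B m` is a finite union of sets of finite measure, so continuity of the measure from above
makes `μ (⋂ m ≤ M, B m)` tend to `0` as `M → ∞`.
-/

open Filter Set
open scoped Topology

section Fluctuation

variable {ι X E : Type*} [PseudoMetricSpace E] {f : ι → X → E} {ε : ℝ}

/-- The set of points at which two functions of the family `f` with indices in `s` differ by at
least `ε`. Convergence statements bound the measure of such sets. -/
def fluctuationSet (f : ι → X → E) (ε : ℝ) (s : Set ι) : Set X :=
  {x | ∃ n ∈ s, ∃ n' ∈ s, ε ≤ dist (f n x) (f n' x)}

theorem fluctuationSet_eq_biUnion (f : ι → X → E) (ε : ℝ) (s : Set ι) :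
    fluctuationSet f ε s = ⋃ n ∈ s, ⋃ n' ∈ s, {x | ε ≤ dist (f n x) (f n' x)} := by
  ext x
  simp only [fluctuationSet, mem_ofPred_eq, mem_iUnion, exists_prop]

theorem fluctuationSet_mono {s t : Set ι} (hst : s ⊆ t) :
    fluctuationSet f ε s ⊆ fluctuationSet f ε t :=
  fun _ ⟨n, hn, n', hn', h⟩ => ⟨n, hst hn, n', hst hn', h⟩

theorem exists_notMem_fluctuationSet_Ici [SemilatticeSup ι] [Nonempty ι] {x : X}
    (hx : CauchySeq fun n => f n x) (hε : 0 < ε) : ∃ N, x ∉ fluctuationSet f ε (Ici N) := by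
  obtain ⟨N, hN⟩ := Metric.cauchySeq_iff.1 hx ε hε
  exact ⟨N, fun ⟨n, hn, n', hn', h⟩ => (hN n hn n' hn').not_ge h⟩

variable [MeasurableSpace X] {μ : Measure X}

theorem nullMeasurableSet_fluctuationSet {s : Set ι} (hs : s.Countable)
    (hf : ∀ n ∈ s, AEStronglyMeasurable (f n) μ) :
    NullMeasurableSet (fluctuationSet f ε s) μ := by
  rw [fluctuationSet_eq_biUnion]
  exact .biUnion hs fun n hn => .biUnion hs fun n' hn' =>
    nullMeasurableSet_le aemeasurable_const ((hf n hn).dist (hf n' hn')).aemeasurable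

theorem measure_fluctuationSet_lt_top {s : Set ι} (hs : s.Finite)
    (hfin : ∀ n ∈ s, ∀ n' ∈ s, μ {x | ε ≤ dist (f n x) (f n' x)} < ⊤) :
    μ (fluctuationSet f ε s) < ⊤ := by
  rw [fluctuationSet_eq_biUnion]
  exact measure_biUnion_lt_top hs fun n hn => measure_biUnion_lt_top hs (hfin n hn)

variable [SemilatticeSup ι] [Nonempty ι] {s : ι → Set ι}

theorem measure_iInter_fluctuationSet_eq_zero (hcauchy : ∀ᵐ x ∂μ, CauchySeq fun n => f n x)
    (hε : 0 < ε) (hs : ∀ m, s m ⊆ Ici m) : μ (⋂ m, fluctuationSet f ε (s m)) = 0 := by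
  refine measure_mono_null ?_ (ae_iff.1 hcauchy)
  intro x hx hx_cauchy
  obtain ⟨N, hN⟩ := exists_notMem_fluctuationSet_Ici hx_cauchy hε
  exact hN (fluctuationSet_mono (hs N) (mem_iInter.1 hx N))

theorem tendsto_measure_iInter_le_fluctuationSet [Countable ι]
    (hf : ∀ n, AEStronglyMeasurable (f n) μ) (hcauchy : ∀ᵐ x ∂μ, CauchySeq fun n => f n x)
    (hε : 0 < ε) (hs : ∀ m, s m ⊆ Ici m) (hfin : ∃ m, μ (fluctuationSet f ε (s m)) ≠ ⊤) :
    Tendsto (fun M => μ (⋂ m ≤ M, fluctuationSet f ε (s m))) atTop (𝓝 0) := by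
  rw [← measure_iInter_fluctuationSet_eq_zero hcauchy hε hs]
  exact tendsto_measure_iInter_le
    (fun m => nullMeasurableSet_fluctuationSet (to_countable (s m)) fun n _ => hf n) hfin

end Fluctuation

/-- Almost uniform metastable pointwise (AUM) convergence of a family `f` of functions with values
in a pseudometric space. The bound `M` may depend on `lam`, `ε` and `F`, but not on the point. -/
def ConvergesAUM {ι X E : Type*} [Preorder ι] [PseudoMetricSpace E] [MeasurableSpace X]
    (μ : Measure X) (f : ι → X → E) : Prop :=
  ∀ lam : ℝ, 0 < lam → ∀ ε : ℝ, 0 < ε → ∀ F : ι → ι, ∃ M : ι,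
    μ {x | ∀ m ≤ M, x ∈ fluctuationSet f ε (Icc m (F m))} < ENNReal.ofReal lam

theorem stmt_15_general {ι X E : Type*} [SemilatticeSup ι] [Nonempty ι] [Countable ι]
    [LocallyFiniteOrder ι] [PseudoMetricSpace E] [MeasurableSpace X] (μ : Measure X)
    (f : ι → X → E) (hf : ∀ n, AEStronglyMeasurable (f n) μ)
    (hfin : ∀ ε : ℝ, 0 < ε → ∃ N, ∀ n ≥ N, ∀ n' ≥ N, μ {x | ε ≤ dist (f n x) (f n' x)} < ⊤)
    (hAE : ∀ᵐ x ∂μ, CauchySeq fun n => f n x) : ConvergesAUM μ f := by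
  intro lam hlam ε hε F
  obtain ⟨N, hN⟩ := hfin ε hε
  have hfinite : μ (fluctuationSet f ε (Icc N (F N))) < ⊤ :=
    measure_fluctuationSet_lt_top (finite_Icc N (F N)) fun n hn n' hn' => hN n hn.1 n' hn'.1
  have htendsto := tendsto_measure_iInter_le_fluctuationSet (s := fun m => Icc m (F m)) hf hAE hε
    (fun _ => Icc_subset_Ici_self) ⟨N, hfinite.ne⟩
  obtain ⟨M, hM⟩ := (htendsto.eventually_lt_const (ENNReal.ofReal_pos.2 hlam)).exists
  exact ⟨M, by simpa only [ofPred_forall, ofPred_mem_eq] using hM⟩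

theorem stmt_15 {X : Type*} [MeasurableSpace X] (μ : Measure X)
    (f : ℕ → X → ℝ) (hf : ∀ n, Measurable (f n))
    (hfin : ∀ ε : ℝ, 0 < ε → ∀ n n' : ℕ,
      μ {x | ε ≤ |f n x - f n' x|} < ⊤)
    (hAE : ∀ᵐ x ∂μ, CauchySeq (fun n => f n x)) :
    ∀ lam : ℝ, 0 < lam → ∀ ε : ℝ, 0 < ε → ∀ F : ℕ → ℕ, ∃ M : ℕ,
      μ {x | ∀ m ≤ M, ∃ n ∈ Set.Icc m (F m), ∃ n' ∈ Set.Icc m (F m),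
          ε ≤ |f n x - f n' x|} < ENNReal.ofReal lam := by
  exact stmt_15_general μ f (fun n => (hf n).aestronglyMeasurable)
    (fun ε hε => ⟨0, fun n _ n' _ => hfin ε hε n n'⟩) hAE
end
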